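/- For every integer j ≥ 0, all complex numbers c₁, c₂, and every integer k ≥ 2, there exist a finite index set I, and for each i ∈ I nonnegative integers j₁ⁱ, j₂ⁱ, j₃ⁱ with j₁ⁱ + j₂ⁱ + j₃ⁱ = k + j − 2 and complex numbers a₁ⁱ, b₁ⁱ, a₂ⁱ, b₂ⁱ, a₃ⁱ, b₃ⁱ, such that for every smooth complex-valued 2π-periodic function u with zero mean: ∫₀^{2π} ((c₁ + c₂H)∂ₓ^{j} u)·w_k^Q(u) dx = Σ_{i∈I} ∫₀^{2π} ((a₁ⁱ + b₁ⁱH)∂ₓ^{j₁ⁱ} u)·((a₂ⁱ + b₂ⁱH)∂ₓ^{j₂ⁱ} u)·((a₃ⁱ + b₃ⁱH)∂ₓ^{j₃ⁱ} u) dx. -/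

import Mathlib

/-- `n`-th Fourier coefficient of a `2π`-periodic function. -/
noncomputable def fourierCoef (f : ℝ → ℂ) (n : ℤ) : ℂ :=
  (1 / (2 * Real.pi)) * ∫ x in (0:ℝ)..(2 * Real.pi), f x * Complex.exp (-Complex.I * n * x)

/-- Projection `P₋` onto negative Fourier modes (via the Fourier series). -/
noncomputable def Pminus (f : ℝ → ℂ) : ℝ → ℂ :=
  fun x => ∑' n : ℤ, if n < 0 then fourierCoef f n * Complex.exp (Complex.I * n * x) else 0

/-- The Matsuno densities: `w₁(u) = u` and for `n ≥ 2`
`wₙ(u) = i·P₋∂ₓ w_{n-1}(u) − Σ_{k=2}^n ((−1)^{k+1}/k!)·Σ_{j₁+⋯+j_k=n, jᵢ≥1} w_{j₁}(u)⋯w_{j_k}(u)`. -/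
noncomputable def matsunoW (u : ℝ → ℂ) : ℕ → ℝ → ℂ := fun n =>
  Nat.strongRecOn n fun n prev =>
    if n = 0 then fun _ => 0
    else if n = 1 then u
    else
      let W : ℕ → ℝ → ℂ := fun m => if hm : m < n then prev m hm else fun _ => 0
      fun x =>
        Complex.I * Pminus (deriv (W (n - 1))) x -
          ∑ k ∈ Finset.Icc 2 n, ((-1 : ℂ) ^ (k + 1) / (Nat.factorial k : ℂ)) *
            ∑ j ∈ (Finset.Nat.antidiagonalTuple k n).filter (fun j => ∀ i, 1 ≤ j i),
              ∏ i, W (j i) x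

/-- The Hilbert transform `H(e^{inx}) = -i·sgn(n)·e^{inx}` (via the Fourier series). -/
noncomputable def HilbT (f : ℝ → ℂ) : ℝ → ℂ :=
  fun x => ∑' n : ℤ, (-Complex.I * (n.sign : ℂ)) * fourierCoef f n *
    Complex.exp (Complex.I * n * x)

/-- The operator `Λ^j = (c₁ + c₂·H)∂ₓ^j`. -/
noncomputable def Lam (c₁ c₂ : ℂ) (j : ℕ) (u : ℝ → ℂ) : ℝ → ℂ :=
  fun x => c₁ * deriv^[j] u x + c₂ * HilbT (deriv^[j] u) x

/-- The quadratic part `w_k^Q(u) = ½·(d²/dt²)|_{t=0} w_k(tu)`. -/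
noncomputable def wQuad (u : ℝ → ℂ) (k : ℕ) (x : ℝ) : ℂ :=
  iteratedDeriv 2 (fun t : ℝ => matsunoW (fun y => (t : ℂ) * u y) k x) 0 / 2

open Complex
open scoped ContDiff Polynomial

/-- The algebra of smooth `2π`-periodic functions. -/
def smoothPeriodic : Subalgebra ℂ (ℝ → ℂ) where
  carrier := {f | ContDiff ℝ ∞ f ∧ ∀ x, f (x + 2 * Real.pi) = f x}
  mul_mem' hf hg := ⟨hf.1.mul hg.1, fun x => by simp [hf.2 x, hg.2 x]⟩
  add_mem' hf hg := ⟨hf.1.add hg.1, fun x => by simp [hf.2 x, hg.2 x]⟩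
  algebraMap_mem' c := ⟨contDiff_const, fun _ => rfl⟩

lemma continuous_of_mem_smoothPeriodic {f : ℝ → ℂ} (hf : f ∈ smoothPeriodic) : Continuous f :=
  hf.1.continuous

lemma deriv_mem_smoothPeriodic {f : ℝ → ℂ} (hf : f ∈ smoothPeriodic) :
    deriv f ∈ smoothPeriodic := by
  refine ⟨(contDiff_infty_iff_deriv.1 hf.1).2, fun x => ?_⟩
  rw [← deriv_comp_add_const]
  exact congrArg (fun g => deriv g x) (funext hf.2)

lemma iterate_deriv_mem_smoothPeriodic {f : ℝ → ℂ} (hf : f ∈ smoothPeriodic) (k : ℕ) :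
    deriv^[k] f ∈ smoothPeriodic := by
  induction k with
  | zero => exact hf
  | succ k ih => rw [Function.iterate_succ_apply']; exact deriv_mem_smoothPeriodic ih

lemma hasDerivAt_exp_mul_ofReal (c : ℂ) (x : ℝ) :
    HasDerivAt (fun x : ℝ => exp (c * x)) (c * exp (c * x)) x := by
  have h := ((hasDerivAt_id (x : ℂ)).const_mul c).cexp.comp_ofReal
  simpa [mul_comm] using h

lemma norm_exp_I_mul_int_mul (n : ℤ) (x : ℝ) : ‖exp (I * n * x)‖ = 1 := by
  have : I * n * x = ((n * x : ℝ) : ℂ) * I := by push_cast; ring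
  rw [this, norm_exp_ofReal_mul_I]

lemma exp_I_mul_int_mul_periodic (n : ℤ) (x : ℝ) :
    exp (I * n * (x + 2 * Real.pi : ℝ)) = exp (I * n * x) := by
  rw [Complex.exp_eq_exp_iff_exists_int]
  exact ⟨n, by push_cast; ring⟩

lemma fourierCoef_eq_fourierCoeff [Fact (0 < 2 * Real.pi)] {f : ℝ → ℂ}
    (hf : Function.Periodic f (2 * Real.pi)) (n : ℤ) :
    fourierCoeff hf.lift n = fourierCoef f n := by
  rw [fourierCoeff_eq_intervalIntegral _ _ 0, fourierCoef, Complex.real_smul]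
  push_cast
  simp only [zero_add]
  congr 1
  refine intervalIntegral.integral_congr fun x _ => ?_
  simp only [fourier_coe_apply, Function.Periodic.lift_coe, smul_eq_mul]
  rw [mul_comm]
  congr 2
  have : (Real.pi : ℂ) ≠ 0 := by exact_mod_cast Real.pi_ne_zero
  push_cast
  field_simp

lemma fourierCoef_deriv {f : ℝ → ℂ} (hf : f ∈ smoothPeriodic) (n : ℤ) :
    fourierCoef (deriv f) n = I * n * fourierCoef f n := by
  have hd : ∀ x, HasDerivAt f (deriv f x) x := fun x =>
    (hf.1.differentiable (by simp) x).hasDerivAt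
  have hc : Continuous fun x : ℝ => -I * n * exp (-I * n * x) := by fun_prop
  have h := intervalIntegral.integral_mul_deriv_eq_deriv_mul (a := 0) (b := 2 * Real.pi)
    (fun x _ => hd x) (fun x _ => hasDerivAt_exp_mul_ofReal (-I * n) x)
    ((continuous_of_mem_smoothPeriodic (deriv_mem_smoothPeriodic hf)).intervalIntegrable _ _)
    (hc.intervalIntegrable _ _)
  have hb : f (2 * Real.pi) = f 0 := by simpa using hf.2 0
  have he : exp (-I * n * (2 * Real.pi : ℝ)) = exp (-I * n * (0 : ℝ)) := by
    have := exp_I_mul_int_mul_periodic (-n) 0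
    simpa using this
  rw [hb, he, sub_self, zero_sub] at h
  rw [fourierCoef, fourierCoef, ← neg_neg (∫ x in _.._, deriv f x * _), ← h]
  have : ∀ x : ℝ, f x * (-I * n * exp (-I * n * x)) = (-I * n) * (f x * exp (-I * n * x)) :=
    fun x => by ring
  simp_rw [this]
  rw [intervalIntegral.integral_const_mul]
  ring

lemma fourierCoef_iterate_deriv {f : ℝ → ℂ} (hf : f ∈ smoothPeriodic) (k : ℕ) (n : ℤ) :
    fourierCoef (deriv^[k] f) n = (I * n) ^ k * fourierCoef f n := by
  induction k with
  | zero => simp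
  | succ k ih =>
    rw [Function.iterate_succ_apply', fourierCoef_deriv (iterate_deriv_mem_smoothPeriodic hf k), ih]
    ring

lemma norm_fourierCoef_le (f : ℝ → ℂ) (n : ℤ) :
    ‖fourierCoef f n‖ ≤ ‖(1 / (2 * Real.pi) : ℂ)‖ * ∫ x in (0:ℝ)..(2 * Real.pi), ‖f x‖ := by
  rw [fourierCoef, norm_mul]
  gcongr
  refine (intervalIntegral.norm_integral_le_integral_norm (by positivity)).trans_eq ?_
  refine intervalIntegral.integral_congr fun x _ => ?_
  have : exp (-I * n * x) = exp (I * (-n : ℤ) * x) := by push_cast; ring_nf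
  simp only [norm_mul, this, norm_exp_I_mul_int_mul, mul_one]

lemma summable_pow_mul_norm_fourierCoef {f : ℝ → ℂ} (hf : f ∈ smoothPeriodic) (k : ℕ) :
    Summable fun n : ℤ => |(n : ℝ)| ^ k * ‖fourierCoef f n‖ := by
  obtain ⟨C, hC⟩ : ∃ C, ∀ n, ‖fourierCoef (deriv^[k + 2] f) n‖ ≤ C := ⟨_, norm_fourierCoef_le _⟩
  have hs : Summable fun n : ℤ => C * (1 / (n : ℝ) ^ 2) :=
    (Real.summable_one_div_int_pow.2 one_lt_two).mul_left C
  refine hs.of_norm_bounded_eventually ?_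
  filter_upwards [(Set.finite_singleton (0 : ℤ)).compl_mem_cofinite] with n hn
  have hn' : (0 : ℝ) < |(n : ℝ)| := by simpa using hn
  have h := hC n
  rw [fourierCoef_iterate_deriv hf, norm_mul, norm_pow, norm_mul, norm_I, one_mul,
    Complex.norm_intCast] at h
  rw [Real.norm_of_nonneg (by positivity), mul_one_div, ← sq_abs, le_div_iff₀ (by positivity)]
  calc _ = |(n : ℝ)| ^ (k + 2) * ‖fourierCoef f n‖ := by ring
    _ ≤ C := h

lemma hasSum_fourierCoef {f : ℝ → ℂ} (hf : f ∈ smoothPeriodic) (x : ℝ) :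
    HasSum (fun n : ℤ => fourierCoef f n * exp (I * n * x)) (f x) := by
  have : Fact (0 < 2 * Real.pi) := ⟨by positivity⟩
  have hp : Function.Periodic f (2 * Real.pi) := hf.2
  let g : C(AddCircle (2 * Real.pi), ℂ) :=
    ⟨hp.lift, (continuous_of_mem_smoothPeriodic hf).quotient_liftOn' _⟩
  have hg : ∀ n, fourierCoeff g n = fourierCoef f n := fourierCoef_eq_fourierCoeff hp
  have hs : Summable (fourierCoeff g) := by
    refine Summable.of_norm ?_
    simpa [funext hg] using summable_pow_mul_norm_fourierCoef hf 0
  have h := has_pointwise_sum_fourier_series_of_summable hs (x : AddCircle (2 * Real.pi))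
  refine (congrArg (HasSum · _) (funext fun n => ?_)).mpr h
  rw [hg, fourier_coe_apply, smul_eq_mul]
  congr 2
  have : (Real.pi : ℂ) ≠ 0 := by exact_mod_cast Real.pi_ne_zero
  push_cast
  field_simp

lemma eq_of_fourierCoef_eq {f g : ℝ → ℂ} (hf : f ∈ smoothPeriodic) (hg : g ∈ smoothPeriodic)
    (h : ∀ n, fourierCoef f n = fourierCoef g n) : f = g := by
  funext x
  have := hasSum_fourierCoef hf x
  simp_rw [h] at this
  exact this.unique (hasSum_fourierCoef hg x)

lemma hasSum_integral_mul_tsum {a : ℤ → ℂ} (ha : Summable fun n => ‖a n‖) {f : ℝ → ℂ}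
    (hf : Continuous f) :
    HasSum (fun n : ℤ => a n * ∫ x in (0:ℝ)..(2 * Real.pi), f x * exp (I * n * x))
      (∫ x in (0:ℝ)..(2 * Real.pi), f x * ∑' n : ℤ, a n * exp (I * n * x)) := by
  let F : ℤ → C(ℝ, ℂ) := fun n => ⟨fun x => f x * (a n * exp (I * n * x)), by fun_prop⟩
  obtain ⟨C, hC⟩ := (isCompact_uIcc (a := (0:ℝ)) (b := 2 * Real.pi)).exists_bound_of_continuousOn
    hf.continuousOn
  have h := intervalIntegral.hasSum_intervalIntegral_of_summable_norm (a := 0)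
    (b := 2 * Real.pi) (f := F) ?_
  · simp only [F, ContinuousMap.coe_mk, tsum_mul_left] at h
    refine (congrArg (HasSum · _) (funext fun n => ?_)).mpr h
    rw [← intervalIntegral.integral_const_mul]
    exact intervalIntegral.integral_congr fun x _ => by ring
  · refine Summable.of_nonneg_of_le (fun _ => norm_nonneg _) (fun n => ?_) (ha.mul_left C)
    have hC0 : 0 ≤ C := (norm_nonneg _).trans (hC 0 Set.left_mem_uIcc)
    refine (ContinuousMap.norm_le _ (by positivity)).2 fun x => ?_
    simp only [ContinuousMap.restrict_apply, F, ContinuousMap.coe_mk, norm_mul,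
      norm_exp_I_mul_int_mul, mul_one]
    gcongr
    exact hC _ x.2

lemma integral_mul_exp (f : ℝ → ℂ) (n : ℤ) :
    ∫ x in (0:ℝ)..(2 * Real.pi), f x * exp (I * n * x)
      = 2 * Real.pi * fourierCoef f (-n) := by
  have : (Real.pi : ℂ) ≠ 0 := by exact_mod_cast Real.pi_ne_zero
  rw [fourierCoef]
  push_cast
  simp only [neg_mul_neg]
  field_simp

lemma integral_mul_eq_tsum {f g : ℝ → ℂ} (hf : f ∈ smoothPeriodic) (hg : g ∈ smoothPeriodic) :
    ∫ x in (0:ℝ)..(2 * Real.pi), f x * g x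
      = ∑' n : ℤ, fourierCoef g n * (2 * Real.pi * fourierCoef f (-n)) := by
  have hs : Summable fun n : ℤ => ‖fourierCoef g n‖ := by
    simpa using summable_pow_mul_norm_fourierCoef hg 0
  have h := hasSum_integral_mul_tsum hs (continuous_of_mem_smoothPeriodic hf)
  simp only [integral_mul_exp, (hasSum_fourierCoef hg _).tsum_eq] at h
  exact h.tsum_eq.symm

lemma integral_exp_mul_exp (m n : ℤ) :
    ∫ x in (0:ℝ)..(2 * Real.pi), exp (-I * m * x) * exp (I * n * x)
      = if n = m then 2 * (Real.pi : ℂ) else 0 := by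
  have h : ∀ x : ℝ, exp (-I * m * x) * exp (I * n * x) = exp (I * (n - m) * x) := fun x => by
    rw [← exp_add]; ring_nf
  simp only [h]
  split_ifs with hnm
  · simp [hnm]
  · have hc : I * ((n : ℂ) - m) ≠ 0 := by
      simpa [sub_eq_zero] using hnm
    rw [integral_exp_mul_complex hc]
    have := exp_I_mul_int_mul_periodic (n - m) 0
    push_cast at this ⊢
    rw [zero_add] at this
    rw [this, sub_self, zero_div]

lemma iteratedDeriv_const_mul_exp (a c : ℂ) (k : ℕ) :
    iteratedDeriv k (fun x : ℝ => a * exp (c * x)) = fun x : ℝ => a * c ^ k * exp (c * x) := by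
  induction k with
  | zero => simp
  | succ k ih =>
    rw [iteratedDeriv_succ, ih]
    funext x
    rw [((hasDerivAt_exp_mul_ofReal c x).const_mul _).deriv]
    ring

lemma tsum_mul_exp_mem_smoothPeriodic {a : ℤ → ℂ}
    (ha : ∀ k : ℕ, Summable fun n : ℤ => |(n : ℝ)| ^ k * ‖a n‖) :
    (fun x : ℝ => ∑' n : ℤ, a n * exp (I * n * x)) ∈ smoothPeriodic := by
  refine ⟨?_, fun x => tsum_congr fun n => by rw [exp_I_mul_int_mul_periodic]⟩
  refine contDiff_tsum (N := (⊤ : ℕ∞)) (v := fun k (n : ℤ) => |(n : ℝ)| ^ k * ‖a n‖)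
    (fun n => ?_) (fun k _ => ha k) (fun k n x _ => ?_)
  · exact contDiff_const.mul ((contDiff_const.mul ofRealCLM.contDiff).cexp)
  · rw [norm_iteratedFDeriv_eq_norm_iteratedDeriv, iteratedDeriv_const_mul_exp]
    simp only [norm_mul, norm_pow, norm_exp_I_mul_int_mul, norm_I, one_mul, mul_one,
      Complex.norm_intCast]
    exact (mul_comm _ _).le

lemma fourierCoef_tsum_mul_exp {a : ℤ → ℂ} (ha : Summable fun n => ‖a n‖) (m : ℤ) :
    fourierCoef (fun x : ℝ => ∑' n : ℤ, a n * exp (I * n * x)) m = a m := by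
  have h := hasSum_integral_mul_tsum ha (f := fun x : ℝ => exp (-I * m * x)) (by fun_prop)
  simp only [integral_exp_mul_exp, mul_ite, mul_zero] at h
  have h' := (hasSum_ite_eq m (a m * (2 * Real.pi))).unique
    ((congrArg (HasSum · _) (funext fun n => by
      split_ifs with hn
      · rw [hn]
      · simp)).mpr h)
  have hpi : (Real.pi : ℂ) ≠ 0 := by exact_mod_cast Real.pi_ne_zero
  rw [fourierCoef]
  simp only [mul_comm _ (exp (-I * m * _))]
  rw [← h']
  field_simp

lemma summable_pow_mul_norm_multiplier {f : ℝ → ℂ} (hf : f ∈ smoothPeriodic) {m : ℤ → ℂ}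
    (hm : ∀ n, ‖m n‖ ≤ 1) (k : ℕ) :
    Summable fun n : ℤ => |(n : ℝ)| ^ k * ‖m n * fourierCoef f n‖ := by
  refine Summable.of_nonneg_of_le (fun _ => by positivity) (fun n => ?_)
    (summable_pow_mul_norm_fourierCoef hf k)
  rw [norm_mul]
  gcongr
  exact mul_le_of_le_one_left (norm_nonneg _) (hm n)

lemma norm_neg_I_mul_sign_le_one (n : ℤ) : ‖-I * (n.sign : ℂ)‖ ≤ 1 := by
  rcases lt_trichotomy n 0 with h | rfl | h
  · simp [Int.sign_eq_neg_one_of_neg h]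
  · simp
  · simp [Int.sign_eq_one_of_pos h]

lemma HilbT_mem_smoothPeriodic {f : ℝ → ℂ} (hf : f ∈ smoothPeriodic) :
    HilbT f ∈ smoothPeriodic :=
  tsum_mul_exp_mem_smoothPeriodic
    (summable_pow_mul_norm_multiplier hf norm_neg_I_mul_sign_le_one)

lemma fourierCoef_HilbT {f : ℝ → ℂ} (hf : f ∈ smoothPeriodic) (n : ℤ) :
    fourierCoef (HilbT f) n = -I * n.sign * fourierCoef f n :=
  fourierCoef_tsum_mul_exp
    (by simpa using summable_pow_mul_norm_multiplier hf norm_neg_I_mul_sign_le_one 0) n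

lemma norm_ite_neg_le_one (n : ℤ) : ‖(if n < 0 then 1 else 0 : ℂ)‖ ≤ 1 := by
  split_ifs <;> simp

lemma Pminus_eq_tsum (f : ℝ → ℂ) :
    Pminus f = fun x : ℝ =>
      ∑' n : ℤ, (if n < 0 then 1 else 0 : ℂ) * fourierCoef f n * exp (I * n * x) := by
  funext x
  refine tsum_congr fun n => ?_
  split_ifs <;> simp

lemma Pminus_mem_smoothPeriodic {f : ℝ → ℂ} (hf : f ∈ smoothPeriodic) :
    Pminus f ∈ smoothPeriodic := by
  rw [Pminus_eq_tsum]
  exact tsum_mul_exp_mem_smoothPeriodic (summable_pow_mul_norm_multiplier hf norm_ite_neg_le_one)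

lemma fourierCoef_Pminus {f : ℝ → ℂ} (hf : f ∈ smoothPeriodic) (n : ℤ) :
    fourierCoef (Pminus f) n = if n < 0 then fourierCoef f n else 0 := by
  rw [Pminus_eq_tsum, fourierCoef_tsum_mul_exp
    (by simpa using summable_pow_mul_norm_multiplier hf norm_ite_neg_le_one 0)]
  split_ifs <;> simp

lemma fourierCoef_add {f g : ℝ → ℂ} (hf : f ∈ smoothPeriodic) (hg : g ∈ smoothPeriodic) (n : ℤ) :
    fourierCoef (f + g) n = fourierCoef f n + fourierCoef g n := by
  have hf' := continuous_of_mem_smoothPeriodic hf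
  have hg' := continuous_of_mem_smoothPeriodic hg
  simp only [fourierCoef, Pi.add_apply, add_mul]
  rw [intervalIntegral.integral_add, mul_add] <;>
    exact Continuous.intervalIntegrable (by fun_prop) _ _

lemma fourierCoef_smul (c : ℂ) (f : ℝ → ℂ) (n : ℤ) :
    fourierCoef (c • f) n = c * fourierCoef f n := by
  simp only [fourierCoef, Pi.smul_apply, smul_eq_mul, mul_assoc]
  rw [intervalIntegral.integral_const_mul]
  ring

lemma Lam_eq_add (c₁ c₂ : ℂ) (j : ℕ) (u : ℝ → ℂ) :
    Lam c₁ c₂ j u = c₁ • deriv^[j] u + c₂ • HilbT (deriv^[j] u) := rfl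

lemma Lam_mem_smoothPeriodic {u : ℝ → ℂ} (hu : u ∈ smoothPeriodic) (c₁ c₂ : ℂ) (j : ℕ) :
    Lam c₁ c₂ j u ∈ smoothPeriodic := by
  have h := iterate_deriv_mem_smoothPeriodic hu j
  exact add_mem (Subalgebra.smul_mem _ h _) (Subalgebra.smul_mem _ (HilbT_mem_smoothPeriodic h) _)

lemma fourierCoef_Lam {u : ℝ → ℂ} (hu : u ∈ smoothPeriodic) (c₁ c₂ : ℂ) (j : ℕ) (n : ℤ) :
    fourierCoef (Lam c₁ c₂ j u) n
      = (c₁ + c₂ * (-I * n.sign)) * (I * n) ^ j * fourierCoef u n := by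
  have h := iterate_deriv_mem_smoothPeriodic hu j
  rw [Lam_eq_add, fourierCoef_add (Subalgebra.smul_mem _ h _)
    (Subalgebra.smul_mem _ (HilbT_mem_smoothPeriodic h) _), fourierCoef_smul, fourierCoef_smul,
    fourierCoef_HilbT h, fourierCoef_iterate_deriv hu]
  ring

lemma I_smul_Pminus_deriv_mem_smoothPeriodic {f : ℝ → ℂ} (hf : f ∈ smoothPeriodic) :
    I • Pminus (deriv f) ∈ smoothPeriodic :=
  Subalgebra.smul_mem _ (Pminus_mem_smoothPeriodic (deriv_mem_smoothPeriodic hf)) _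

lemma fourierCoef_I_smul_Pminus_deriv {f : ℝ → ℂ} (hf : f ∈ smoothPeriodic) (n : ℤ) :
    fourierCoef (I • Pminus (deriv f)) n = if n < 0 then -n * fourierCoef f n else 0 := by
  rw [fourierCoef_smul, fourierCoef_Pminus (deriv_mem_smoothPeriodic hf), fourierCoef_deriv hf]
  split_ifs
  · linear_combination (n * fourierCoef f n) * I_mul_I
  · simp

/-- The operator `i·P₋∂ₓ` on smooth periodic functions. -/
noncomputable def iPminusDeriv : smoothPeriodic →ₗ[ℂ] smoothPeriodic where
  toFun f := ⟨I • Pminus (deriv f), I_smul_Pminus_deriv_mem_smoothPeriodic f.2⟩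
  map_add' f g := Subtype.ext <| eq_of_fourierCoef_eq
    (I_smul_Pminus_deriv_mem_smoothPeriodic (add_mem f.2 g.2))
    (add_mem (I_smul_Pminus_deriv_mem_smoothPeriodic f.2)
      (I_smul_Pminus_deriv_mem_smoothPeriodic g.2)) fun n => by
    change fourierCoef (I • Pminus (deriv ((f : ℝ → ℂ) + g))) n
      = fourierCoef (I • Pminus (deriv f) + I • Pminus (deriv g)) n
    rw [fourierCoef_I_smul_Pminus_deriv (add_mem f.2 g.2),
      fourierCoef_add (I_smul_Pminus_deriv_mem_smoothPeriodic f.2)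
        (I_smul_Pminus_deriv_mem_smoothPeriodic g.2), fourierCoef_I_smul_Pminus_deriv f.2,
      fourierCoef_I_smul_Pminus_deriv g.2, fourierCoef_add f.2 g.2]
    split_ifs <;> ring
  map_smul' c f := Subtype.ext <| eq_of_fourierCoef_eq
    (I_smul_Pminus_deriv_mem_smoothPeriodic (Subalgebra.smul_mem _ f.2 c))
    (Subalgebra.smul_mem _ (I_smul_Pminus_deriv_mem_smoothPeriodic f.2) c) fun n => by
    change fourierCoef (I • Pminus (deriv (c • (f : ℝ → ℂ)))) n
      = fourierCoef (c • I • Pminus (deriv f)) n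
    rw [fourierCoef_I_smul_Pminus_deriv (Subalgebra.smul_mem _ f.2 c), fourierCoef_smul c f,
      fourierCoef_smul c (I • _), fourierCoef_I_smul_Pminus_deriv f.2]
    split_ifs <;> ring

/-- The part of `wₙ` that is linear in `u`. -/
noncomputable def matsunoLinear (u : smoothPeriodic) : ℕ → smoothPeriodic
  | 0 => 0
  | 1 => u
  | n + 2 => iPminusDeriv (matsunoLinear u (n + 1))

/-- The part of `wₙ` that is quadratic in `u`. -/
noncomputable def matsunoQuadratic (u : smoothPeriodic) : ℕ → smoothPeriodic
  | 0 => 0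
  | n + 1 => iPminusDeriv (matsunoQuadratic u n) + (1 / 2 : ℂ) •
      ∑ p ∈ Finset.HasAntidiagonal.antidiagonal (n + 1), matsunoLinear u p.1 * matsunoLinear u p.2

lemma matsunoW_zero (u : ℝ → ℂ) : matsunoW u 0 = fun _ => 0 := by
  rw [matsunoW, Nat.strongRecOn_eq, if_pos rfl]

lemma matsunoW_one (u : ℝ → ℂ) : matsunoW u 1 = u := by
  rw [matsunoW, Nat.strongRecOn_eq, if_neg one_ne_zero, if_pos rfl]

lemma apply_lt_of_mem_antidiagonalTuple {k n : ℕ} (hk : 2 ≤ k) {j : Fin k → ℕ}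
    (hj : j ∈ (Finset.Nat.antidiagonalTuple k n).filter fun j => ∀ i, 1 ≤ j i) (i : Fin k) :
    j i < n := by
  rw [Finset.mem_filter, Finset.Nat.mem_antidiagonalTuple] at hj
  have : Nontrivial (Fin k) := Fin.nontrivial_iff_two_le.2 hk
  obtain ⟨l, hl⟩ := exists_ne i
  rw [← hj.1]
  exact Finset.single_lt_sum hl (Finset.mem_univ _) (Finset.mem_univ _) (hj.2 l)
    fun _ _ _ => Nat.zero_le _

lemma matsunoW_of_two_le (u : ℝ → ℂ) {n : ℕ} (hn : 2 ≤ n) :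
    matsunoW u n = I • Pminus (deriv (matsunoW u (n - 1))) -
      ∑ k ∈ Finset.Icc 2 n, ((-1 : ℂ) ^ (k + 1) / (Nat.factorial k : ℂ)) •
        ∑ j ∈ (Finset.Nat.antidiagonalTuple k n).filter (fun j => ∀ i, 1 ≤ j i),
          ∏ i, matsunoW u (j i) := by
  conv_lhs => rw [matsunoW, Nat.strongRecOn_eq]
  rw [if_neg (by lia), if_neg (by lia)]
  funext x
  simp only [Pi.sub_apply, Pi.smul_apply, smul_eq_mul, Finset.sum_apply, Finset.prod_apply]
  rw [dif_pos (show n - 1 < n by lia)]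
  congr 1
  refine Finset.sum_congr rfl fun k hk => ?_
  congr 1
  refine Finset.sum_congr rfl fun j hj => Finset.prod_congr rfl fun i _ => ?_
  rw [dif_pos (apply_lt_of_mem_antidiagonalTuple (Finset.mem_Icc.1 hk).1 hj i)]
  rfl

lemma exists_polynomial_coeff_eq_apply {R A : Type*} [CommRing R] [CommRing A] [Algebra R A]
    (D : A →ₗ[R] A) (p : A[X]) :
    ∃ q : A[X], (∀ d, q.coeff d = D (p.coeff d)) ∧
      ∀ t : R, q.eval (algebraMap R A t) = D (p.eval (algebraMap R A t)) := by
  refine ⟨∑ d ∈ p.support, Polynomial.monomial d (D (p.coeff d)), fun d => ?_, fun t => ?_⟩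
  · rw [Polynomial.finsetSum_coeff]
    simp only [Polynomial.coeff_monomial, Finset.sum_ite_eq']
    split_ifs with h
    · rfl
    · rw [Polynomial.notMem_support_iff.1 h, map_zero]
  · rw [Polynomial.eval_finsetSum, Polynomial.eval_eq_sum, Polynomial.sum, map_sum]
    refine Finset.sum_congr rfl fun d _ => ?_
    rw [Polynomial.eval_monomial, ← map_pow, ← Algebra.commutes, ← Algebra.smul_def,
      ← Algebra.commutes (t ^ d) (p.coeff d), ← Algebra.smul_def, map_smul]

lemma coeff_prod_eq_zero {A : Type*} [CommRing A] {k d : ℕ} {p : Fin k → A[X]}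
    (hp : ∀ i, (p i).coeff 0 = 0) (hd : d < k) : (∏ i, p i).coeff d = 0 := by
  refine Polynomial.X_pow_dvd_iff.1 ?_ d hd
  have := Finset.prod_dvd_prod_of_dvd (s := Finset.univ) (fun _ : Fin k => (Polynomial.X : A[X])) p
    fun i _ => Polynomial.X_dvd_iff.2 (hp i)
  simpa using this

lemma sum_antidiagonalTuple_two_matsunoLinear (u : smoothPeriodic) (n : ℕ) :
    ∑ j ∈ (Finset.Nat.antidiagonalTuple 2 n).filter (fun j => ∀ i, 1 ≤ j i),
        matsunoLinear u (j 0) * matsunoLinear u (j 1)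
      = ∑ p ∈ Finset.HasAntidiagonal.antidiagonal n, matsunoLinear u p.1 * matsunoLinear u p.2 := by
  rw [Finset.sum_filter_of_ne, Finset.Nat.antidiagonalTuple_two, Finset.sum_map]
  · rfl
  · intro j _ h i
    by_contra! hi
    rw [Nat.lt_one_iff] at hi
    fin_cases i
    · exact h (by simp_all [matsunoLinear])
    · exact h (by simp_all [matsunoLinear])

lemma exists_polynomial_matsunoW (u : smoothPeriodic) (n : ℕ) :
    ∃ p : smoothPeriodic[X],
      (∀ t : ℂ, matsunoW (fun y => t * (u : ℝ → ℂ) y) n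
        = (p.eval (algebraMap ℂ smoothPeriodic t) : smoothPeriodic)) ∧
      p.coeff 0 = 0 ∧ p.coeff 1 = matsunoLinear u n ∧ p.coeff 2 = matsunoQuadratic u n := by
  induction n using Nat.strong_induction_on with
  | _ n ih =>
  rcases n with _ | _ | n
  · refine ⟨0, fun t => ?_, by simp [matsunoLinear, matsunoQuadratic]⟩
    rw [matsunoW_zero, Polynomial.eval_zero]
    rfl
  · refine ⟨Polynomial.C u * Polynomial.X, fun t => ?_, ?_, ?_, ?_⟩
    · rw [zero_add, matsunoW_one, Polynomial.eval_mul, Polynomial.eval_C, Polynomial.eval_X,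
        mul_comm]
      rfl
    · simp
    · simp [matsunoLinear]
    · simp [matsunoLinear, matsunoQuadratic, Finset.Nat.antidiagonal_succ]
  · choose! p hp hp0 hp1 hp2 using ih
    obtain ⟨q, hq, hqe⟩ := exists_polynomial_coeff_eq_apply iPminusDeriv (p (n + 1))
    have hlt : ∀ k ∈ Finset.Icc 2 (n + 2),
        ∀ j ∈ (Finset.Nat.antidiagonalTuple k (n + 2)).filter (fun j => ∀ i, 1 ≤ j i),
        ∀ i, j i < n + 2 := fun k hk j hj =>
      apply_lt_of_mem_antidiagonalTuple (Finset.mem_Icc.1 hk).1 hj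
    let r (k : ℕ) : smoothPeriodic[X] :=
      ∑ j ∈ (Finset.Nat.antidiagonalTuple k (n + 2)).filter (fun j => ∀ i, 1 ≤ j i), ∏ i, p (j i)
    have hr : ∀ k ∈ Finset.Icc 2 (n + 2), ∀ d < k, (r k).coeff d = 0 := fun k hk d hd => by
      rw [Polynomial.finsetSum_coeff]
      exact Finset.sum_eq_zero fun j hj => coeff_prod_eq_zero (fun i => hp0 _ (hlt k hk j hj i)) hd
    have hr2 : (r 2).coeff 2 =
        ∑ p ∈ Finset.HasAntidiagonal.antidiagonal (n + 2),
          matsunoLinear u p.1 * matsunoLinear u p.2 := by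
      rw [Polynomial.finsetSum_coeff, ← sum_antidiagonalTuple_two_matsunoLinear]
      refine Finset.sum_congr rfl fun j hj => ?_
      have h := hlt 2 (Finset.mem_Icc.2 ⟨le_rfl, by lia⟩) j hj
      rw [Fin.prod_univ_two, Polynomial.coeff_mul]
      simp [Finset.Nat.antidiagonal_succ, hp0 _ (h 0), hp0 _ (h 1), hp1 _ (h 0), hp1 _ (h 1)]
    have hsum : ∀ d < 2, (∑ k ∈ Finset.Icc 2 (n + 2),
        ((-1 : ℂ) ^ (k + 1) / (Nat.factorial k : ℂ)) • r k).coeff d = 0 := fun d hd => by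
      rw [Polynomial.finsetSum_coeff]
      refine Finset.sum_eq_zero fun k hk => ?_
      rw [Polynomial.coeff_smul, hr k hk d (hd.trans_le (Finset.mem_Icc.1 hk).1), smul_zero]
    have hsum2 : (∑ k ∈ Finset.Icc 2 (n + 2),
        ((-1 : ℂ) ^ (k + 1) / (Nat.factorial k : ℂ)) • r k).coeff 2 = -((1 / 2 : ℂ) •
        ∑ p ∈ Finset.HasAntidiagonal.antidiagonal (n + 2),
          matsunoLinear u p.1 * matsunoLinear u p.2) := by
      rw [Polynomial.finsetSum_coeff, Finset.sum_eq_single_of_mem 2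
        (Finset.mem_Icc.2 ⟨le_rfl, by lia⟩) fun k hk hk2 => ?_]
      · rw [Polynomial.coeff_smul, hr2, ← neg_smul]
        norm_num
      · rw [Polynomial.coeff_smul, hr k hk 2 (by rw [Finset.mem_Icc] at hk; lia), smul_zero]
    refine ⟨q - ∑ k ∈ Finset.Icc 2 (n + 2),
      ((-1 : ℂ) ^ (k + 1) / (Nat.factorial k : ℂ)) • r k, fun t => ?_, ?_, ?_, ?_⟩
    · rw [matsunoW_of_two_le _ (by lia), show n + 2 - 1 = n + 1 from rfl, hp _ (by lia),
        Polynomial.eval_sub, hqe, Polynomial.eval_finsetSum, AddSubgroupClass.coe_sub,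
        AddSubmonoidClass.coe_finsetSum]
      congr 1
      refine Finset.sum_congr rfl fun k hk => ?_
      rw [Polynomial.eval_smul, Polynomial.eval_finsetSum, SetLike.val_smul,
        AddSubmonoidClass.coe_finsetSum]
      congr 1
      refine Finset.sum_congr rfl fun j hj => ?_
      rw [Polynomial.eval_prod, SubmonoidClass.coe_finsetProd]
      exact Finset.prod_congr rfl fun i _ => hp _ (hlt k hk j hj i) t
    · rw [Polynomial.coeff_sub, hq, hsum 0 two_pos, hp0 _ (by lia), map_zero, sub_zero]
    · rw [Polynomial.coeff_sub, hq, hsum 1 one_lt_two, hp1 _ (by lia), sub_zero, matsunoLinear]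
    · rw [Polynomial.coeff_sub, hq, hp2 _ (by lia), hsum2, sub_neg_eq_add]
      rfl

lemma deriv_eval_ofReal (q : ℂ[X]) :
    deriv (fun t : ℝ => q.eval (t : ℂ)) = fun t : ℝ => q.derivative.eval (t : ℂ) :=
  funext fun t => (q.hasDerivAt (t : ℂ)).comp_ofReal.deriv

lemma wQuad_eq_matsunoQuadratic (u : smoothPeriodic) (k : ℕ) :
    wQuad u k = matsunoQuadratic u k := by
  obtain ⟨p, hp, -, -, hp2⟩ := exists_polynomial_matsunoW u k
  funext x
  let φ : smoothPeriodic →+* ℂ := (Pi.evalRingHom (fun _ : ℝ => ℂ) x).comp smoothPeriodic.subtype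
  have h : (fun t : ℝ => matsunoW (fun y => (t : ℂ) * (u : ℝ → ℂ) y) k x)
      = fun t : ℝ => (p.map φ).eval (t : ℂ) := funext fun t => by
    rw [hp, Polynomial.eval_map]
    exact (Polynomial.eval₂_at_apply φ _).symm
  rw [wQuad, h, iteratedDeriv_succ, iteratedDeriv_one, deriv_eval_ofReal, deriv_eval_ofReal]
  beta_reduce
  rw [ofReal_zero, ← Polynomial.coeff_zero_eq_eval_zero, Polynomial.coeff_derivative,
    Polynomial.coeff_derivative, Polynomial.coeff_map, hp2]
  push_cast
  change (matsunoQuadratic u k : ℝ → ℂ) x * _ * _ / 2 = _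
  ring

/-- Smooth `2π`-periodic functions of zero mean. -/
abbrev SmoothMeanZero : Type := {u : smoothPeriodic // fourierCoef u 0 = 0}

/-- The span of the cubic functionals `u ↦ ∫ ∏_{r<3} ((a_r + b_r·H)∂ₓ^{e_r} u) dx` with `d`
derivatives in total. -/
def cubicFunctionals (d : ℕ) : Submodule ℂ (SmoothMeanZero → ℂ) :=
  Submodule.span ℂ {Φ | ∃ (e : Fin 3 → ℕ) (a b : Fin 3 → ℂ), e 0 + e 1 + e 2 = d ∧
    Φ = fun u => ∫ x in (0:ℝ)..(2 * Real.pi),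
      Lam (a 0) (b 0) (e 0) u.1 x * Lam (a 1) (b 1) (e 1) u.1 x * Lam (a 2) (b 2) (e 2) u.1 x}

lemma iPminusDeriv_eq_Lam {u : SmoothMeanZero} {f : smoothPeriodic} {a b : ℂ} {s : ℕ}
    (hf : (f : ℝ → ℂ) = Lam a b s u.1) :
    (iPminusDeriv f : ℝ → ℂ) = Lam (I * (a + b * I) / 2) ((a + b * I) / 2) (s + 1) u.1 := by
  refine eq_of_fourierCoef_eq (iPminusDeriv f).2 (Lam_mem_smoothPeriodic u.1.2 _ _ _) fun n => ?_
  change fourierCoef (I • Pminus (deriv f)) n = _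
  rw [fourierCoef_I_smul_Pminus_deriv f.2, hf, fourierCoef_Lam u.1.2, fourierCoef_Lam u.1.2]
  rcases lt_trichotomy n 0 with h | rfl | h
  · rw [if_pos h, Int.sign_eq_neg_one_of_neg h, pow_succ]
    push_cast
    linear_combination (-(a + b * I) * n * (I * n) ^ s * fourierCoef u.1 n) * I_mul_I
  · simp [u.2]
  · rw [if_neg h.not_gt, Int.sign_eq_one_of_pos h]
    push_cast
    ring

lemma exists_matsunoLinear_eq_Lam (n : ℕ) :
    ∃ a b : ℂ, ∀ u : SmoothMeanZero, (matsunoLinear u.1 (n + 1) : ℝ → ℂ) = Lam a b n u.1 := by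
  induction n with
  | zero => exact ⟨1, 0, fun u => by funext x; simp [Lam, matsunoLinear]⟩
  | succ n ih =>
    obtain ⟨a, b, h⟩ := ih
    exact ⟨_, _, fun u => iPminusDeriv_eq_Lam (h u)⟩

lemma integral_Lam_mul_iPminusDeriv (u : SmoothMeanZero) (f : smoothPeriodic) (a b : ℂ) (s : ℕ) :
    ∫ x in (0:ℝ)..(2 * Real.pi), Lam a b s u.1 x * (iPminusDeriv f : ℝ → ℂ) x
      = ∫ x in (0:ℝ)..(2 * Real.pi),
        Lam (-I * (a - b * I) / 2) ((a - b * I) / 2) (s + 1) u.1 x * (f : ℝ → ℂ) x := by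
  rw [integral_mul_eq_tsum (Lam_mem_smoothPeriodic u.1.2 _ _ _) (iPminusDeriv f).2,
    integral_mul_eq_tsum (Lam_mem_smoothPeriodic u.1.2 _ _ _) f.2]
  refine tsum_congr fun n => ?_
  change fourierCoef (I • Pminus (deriv f)) n * _ = _
  rw [fourierCoef_I_smul_Pminus_deriv f.2, fourierCoef_Lam u.1.2, fourierCoef_Lam u.1.2]
  rcases lt_trichotomy n 0 with h | rfl | h
  · rw [if_pos h, Int.sign_neg, Int.sign_eq_neg_one_of_neg h, pow_succ]
    push_cast
    linear_combination (-fourierCoef f n * (2 * Real.pi) * (a - b * I) * n * (I * -n) ^ s *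
      fourierCoef u.1 (-n)) * I_mul_I
  · simp [u.2]
  · rw [if_neg h.not_gt, Int.sign_neg, Int.sign_eq_one_of_pos h]
    push_cast
    ring

lemma integral_Lam_mul_matsunoLinear_mem (a b : ℂ) (s m n : ℕ) :
    (fun u : SmoothMeanZero => ∫ x in (0:ℝ)..(2 * Real.pi), Lam a b s u.1 x *
      ((matsunoLinear u.1 m * matsunoLinear u.1 n : smoothPeriodic) : ℝ → ℂ) x)
      ∈ cubicFunctionals (m + n + s - 2) := by
  rcases m with _ | m
  · simp only [matsunoLinear, zero_mul, ZeroMemClass.coe_zero, Pi.zero_apply, mul_zero,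
      intervalIntegral.integral_zero]
    exact zero_mem _
  rcases n with _ | n
  · simp only [matsunoLinear, ZeroMemClass.coe_zero, Pi.zero_apply, mul_zero,
      intervalIntegral.integral_zero]
    exact zero_mem _
  obtain ⟨a₁, b₁, h₁⟩ := exists_matsunoLinear_eq_Lam m
  obtain ⟨a₂, b₂, h₂⟩ := exists_matsunoLinear_eq_Lam n
  refine Submodule.subset_span ⟨![s, m, n], ![a, a₁, a₂], ![b, b₁, b₂], ?_, funext fun u => ?_⟩
  · simp
    lia
  · simp [h₁, h₂, mul_assoc]

lemma integral_Lam_mul_matsunoQuadratic_mem (k : ℕ) (a b : ℂ) (s : ℕ) :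
    (fun u : SmoothMeanZero => ∫ x in (0:ℝ)..(2 * Real.pi), Lam a b s u.1 x *
      (matsunoQuadratic u.1 k : ℝ → ℂ) x) ∈ cubicFunctionals (k + s - 2) := by
  induction k generalizing a b s with
  | zero =>
    simp only [matsunoQuadratic, ZeroMemClass.coe_zero, Pi.zero_apply, mul_zero,
      intervalIntegral.integral_zero]
    exact zero_mem _
  | succ k ih =>
    have h₁ := ih (-I * (a - b * I) / 2) ((a - b * I) / 2) (s + 1)
    rw [show k + (s + 1) - 2 = k + 1 + s - 2 by lia] at h₁
    have h₂ : ∀ p ∈ Finset.HasAntidiagonal.antidiagonal (k + 1), _ ∈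
        cubicFunctionals (k + 1 + s - 2) :=
      fun p hp => Finset.HasAntidiagonal.mem_antidiagonal.1 hp ▸
        integral_Lam_mul_matsunoLinear_mem a b s p.1 p.2
    convert! add_mem h₁ (Submodule.smul_mem _ (1 / 2 : ℂ) (sum_mem h₂)) using 1
    funext u
    have hc : ∀ f : smoothPeriodic, Continuous fun x => Lam a b s u.1 x * (f : ℝ → ℂ) x :=
      fun f => (continuous_of_mem_smoothPeriodic (Lam_mem_smoothPeriodic u.1.2 a b s)).mul
        (continuous_of_mem_smoothPeriodic f.2)
    simp only [Pi.add_apply, Pi.smul_apply, Finset.sum_apply, smul_eq_mul]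
    rw [← integral_Lam_mul_iPminusDeriv,
      ← intervalIntegral.integral_finsetSum fun p _ => (hc _).intervalIntegrable _ _,
      ← intervalIntegral.integral_const_mul,
      ← intervalIntegral.integral_add ((hc _).intervalIntegrable _ _)]
    · refine intervalIntegral.integral_congr fun x _ => ?_
      simp only [matsunoQuadratic, AddMemClass.coe_add, SetLike.val_smul,
        AddSubmonoidClass.coe_finsetSum, Pi.add_apply, Pi.smul_apply, Finset.sum_apply,
        smul_eq_mul, ← Finset.mul_sum]
      ring
    · exact (continuous_const.mul (continuous_finsetSum _ fun p _ => hc _)).intervalIntegrable _ _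

/-- for every `j ≥ 0`, all `c₁, c₂ ∈ ℂ` and every `k ≥ 2`, there are a
finite index set `I` and, for `i ∈ I`, exponents `e_i : Fin 3 → ℕ` with
`e_i 0 + e_i 1 + e_i 2 = k + j − 2` and constants `a_i, b_i : Fin 3 → ℂ` such that for
every smooth `2π`-periodic zero-mean `u`:
`∫₀^{2π} ((c₁+c₂H)∂ₓ^j u)·w_k^Q(u) dx
  = Σ_{i∈I} ∫₀^{2π} ∏_{r<3} ((a_i r + b_i r·H)∂ₓ^{e_i r} u) dx`. -/
theorem stmt_15 (j : ℕ) (c₁ c₂ : ℂ) (k : ℕ) (hk : 2 ≤ k) :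
    ∃ (I : Finset ℕ) (e : ℕ → Fin 3 → ℕ) (a b : ℕ → Fin 3 → ℂ),
      (∀ i ∈ I, e i 0 + e i 1 + e i 2 = k + j - 2) ∧
      ∀ u : ℝ → ℂ, ContDiff ℝ (⊤ : ℕ∞) u → (∀ x, u (x + 2 * Real.pi) = u x) →
        (∫ x in (0:ℝ)..(2 * Real.pi), u x) = 0 →
        (∫ x in (0:ℝ)..(2 * Real.pi), Lam c₁ c₂ j u x * wQuad u k x)
          = ∑ i ∈ I, ∫ x in (0:ℝ)..(2 * Real.pi),
              Lam (a i 0) (b i 0) (e i 0) u x * Lam (a i 1) (b i 1) (e i 1) u x *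
                Lam (a i 2) (b i 2) (e i 2) u x := by
  have h := integral_Lam_mul_matsunoQuadratic_mem k c₁ c₂ j
  obtain ⟨n, c, g, hg⟩ := Submodule.mem_span_set'.1 h
  choose e a b he hΦ using fun i => (g i).2
  refine ⟨Finset.range n, fun i => if hi : i < n then e ⟨i, hi⟩ else 0,
    fun i => if hi : i < n then ![c ⟨i, hi⟩ * a ⟨i, hi⟩ 0, a ⟨i, hi⟩ 1, a ⟨i, hi⟩ 2] else 0,
    fun i => if hi : i < n then ![c ⟨i, hi⟩ * b ⟨i, hi⟩ 0, b ⟨i, hi⟩ 1, b ⟨i, hi⟩ 2] else 0,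
    fun i hi => ?_, fun u hu hper hmean => ?_⟩
  · simp only [dif_pos (Finset.mem_range.1 hi)]
    exact he _
  · let v : SmoothMeanZero := ⟨⟨u, hu, hper⟩, by simp [fourierCoef, hmean]⟩
    have hv := congrFun hg v
    have hw : wQuad u k = matsunoQuadratic v.1 k := wQuad_eq_matsunoQuadratic v.1 k
    rw [hw]
    refine hv.symm.trans ?_
    rw [Finset.sum_range, Finset.sum_apply]
    refine Finset.sum_congr rfl fun i _ => ?_
    simp only [Pi.smul_apply, hΦ, smul_eq_mul, i.2, dif_pos, Fin.eta]
    rw [← intervalIntegral.integral_const_mul]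
    refine intervalIntegral.integral_congr fun x _ => ?_
    simp only [Lam, Matrix.cons_val]
    ring
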